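/- If d is not a Schur root of Q (i.e. a general representation of dimension vector d is decomposable), then there exists a nonzero proper subdimension vector e of d such that W_e = Cone(d). -/

import Mathlib

open scoped BigOperators

/-- A representation of a quiver with vertex set `Q0` and arrow set `Q1`
(with source and target maps `s t : Q1 → Q0`) over a field `k`:
a finite-dimensional `k`-vector space at each vertex and a linear map for each arrow. -/
structure QRep (k : Type) [Field k] {Q0 Q1 : Type} (s t : Q1 → Q0) where
  V : Q0 → Type
  [addgrp : ∀ i, AddCommGroup (V i)]
  [mod : ∀ i, Module k (V i)]
  [fd : ∀ i, FiniteDimensional k (V i)]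
  hom : ∀ a : Q1, V (s a) →ₗ[k] V (t a)

attribute [instance] QRep.addgrp QRep.mod QRep.fd

namespace QRep

variable {k : Type} [Field k] {Q0 Q1 : Type} {s t : Q1 → Q0}

/-- The dimension vector of a representation. -/
noncomputable def dimVec (M : QRep k s t) : Q0 → ℕ := fun i => Module.finrank k (M.V i)

/-- A family of subspaces is a subrepresentation if it is invariant under all arrow maps. -/
def IsSubrep (M : QRep k s t) (U : ∀ i, Submodule k (M.V i)) : Prop :=
  ∀ a : Q1, ∀ x ∈ U (s a), M.hom a x ∈ U (t a)

/-- The dimension vector of a family of subspaces. -/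
noncomputable def subDim (M : QRep k s t) (U : ∀ i, Submodule k (M.V i)) : Q0 → ℕ :=
  fun i => Module.finrank k (U i)

/-- The subrepresentation determined by an invariant family of subspaces. -/
def subRep (M : QRep k s t) (U : ∀ i, Submodule k (M.V i)) (h : M.IsSubrep U) :
    QRep k s t where
  V := fun i => U i
  hom := fun a => (M.hom a).restrict (fun x hx => h a x hx)

/-- The quotient representation by an invariant family of subspaces. -/
def quotRep (M : QRep k s t) (U : ∀ i, Submodule k (M.V i)) (h : M.IsSubrep U) :
    QRep k s t where
  V := fun i => M.V i ⧸ U i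
  hom := fun a => (U (s a)).mapQ (U (t a)) (M.hom a) (fun x hx => h a x hx)

/-- Direct sum of two representations. -/
def dsum (M N : QRep k s t) : QRep k s t where
  V := fun i => M.V i × N.V i
  hom := fun a => (M.hom a).prodMap (N.hom a)

variable [Fintype Q0]

/-- The pairing `θ(d) = θ · d` of a stability parameter with a dimension vector. -/
def pair (θ : Q0 → ℝ) (d : Q0 → ℕ) : ℝ := ∑ i, θ i * (d i : ℝ)

/-- `θ`-semistability: `θ(M) = 0` and `θ(M') ≤ 0` for all subrepresentations. -/
def Semistable (θ : Q0 → ℝ) (M : QRep k s t) : Prop :=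
  pair θ M.dimVec = 0 ∧
    ∀ U : ∀ i, Submodule k (M.V i), M.IsSubrep U → pair θ (M.subDim U) ≤ 0

/-- `θ`-stability: `θ(M) = 0` and `θ(M') < 0` for all proper nonzero subrepresentations. -/
def Stable (θ : Q0 → ℝ) (M : QRep k s t) : Prop :=
  pair θ M.dimVec = 0 ∧
    ∀ U : ∀ i, Submodule k (M.V i), M.IsSubrep U →
      U ≠ (fun _ => ⊥) → U ≠ (fun _ => ⊤) → pair θ (M.subDim U) < 0

end QRep

section Defs

variable (k : Type) [Field k] {Q0 Q1 : Type} (s t : Q1 → Q0)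

/-- `e` is a generic subdimension vector of `d` (Schofield's characterization as definition):
every representation of dimension vector `d` admits a subrepresentation of dimension vector `e`. -/
def GenericSub (e d : Q0 → ℕ) : Prop :=
  e ≤ d ∧ ∀ M : QRep k s t, M.dimVec = d →
    ∃ U : ∀ i, Submodule k (M.V i), M.IsSubrep U ∧ M.subDim U = e

variable [Fintype Q0]

/-- The semistable cone of `d`: stability parameters orthogonal to `d` admitting a
semistable representation of dimension vector `d`. -/
def SstCone (d : Q0 → ℕ) : Set (Q0 → ℝ) :=
  {θ | QRep.pair θ d = 0 ∧ ∃ M : QRep k s t, M.dimVec = d ∧ QRep.Semistable θ M}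

/-- The wall `W_e`: parameters `θ` orthogonal to `d` and `e` such that some `θ`-semistable
representation of dimension vector `d` has a subrepresentation of dimension vector `e`. -/
def Wall (d e : Q0 → ℕ) : Set (Q0 → ℝ) :=
  {θ | QRep.pair θ d = 0 ∧ QRep.pair θ e = 0 ∧
    ∃ (M : QRep k s t) (U : ∀ i, Submodule k (M.V i)),
      M.dimVec = d ∧ M.IsSubrep U ∧ M.subDim U = e ∧ QRep.Semistable θ M}

/-- GIT equivalence of stability parameters: equal semistable loci. -/
def GITEquiv (d : Q0 → ℕ) (θ η : Q0 → ℝ) : Prop :=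
  ∀ M : QRep k s t, M.dimVec = d → (QRep.Semistable θ M ↔ QRep.Semistable η M)

end Defs

/-- The hyperplane `H_e` inside the stability space of `d`. -/
def Hset {Q0 : Type} [Fintype Q0] (d e : Q0 → ℕ) : Set (Q0 → ℝ) :=
  {θ | QRep.pair θ d = 0 ∧ QRep.pair θ e = 0}

section Euler

variable {Q0 Q1 : Type} [Fintype Q0] [Fintype Q1]

/-- The Euler form of the quiver. -/
def euler (s t : Q1 → Q0) (x y : Q0 → ℤ) : ℤ :=
  (∑ i, x i * y i) - ∑ a, x (s a) * y (t a)

/-- `ext(d, e)`: the maximum of `−⟨d', e⟩` over generic subdimension vectors `d' ↪ d`. -/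
noncomputable def extGen (k : Type) [Field k] (s t : Q1 → Q0) (d e : Q0 → ℕ) : ℤ :=
  sSup {z : ℤ | ∃ d' : Q0 → ℕ, GenericSub k s t d' d ∧
    z = -(euler s t (fun i => (d' i : ℤ)) (fun i => (e i : ℤ)))}

end Euler

section Schur

variable {Q0 Q1 : Type} (s t : Q1 → Q0)

/-- Coordinates on the representation space `Rep(Q, d)`. -/
def RepCoords (d : Q0 → ℕ) : Type := Σ a : Q1, Fin (d (t a)) × Fin (d (s a))

/-- The representation associated to a point of the representation space. -/
def matToRep (k : Type) [Field k] (d : Q0 → ℕ)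
    (m : ∀ a : Q1, Matrix (Fin (d (t a))) (Fin (d (s a))) k) : QRep k s t where
  V := fun i => Fin (d i) → k
  hom := fun a => Matrix.mulVecLin (m a)

/-- A nonzero representation is indecomposable if it is not a direct sum of two nonzero
subrepresentations. -/
def Indecomposable (k : Type) [Field k] (M : QRep k s t) : Prop :=
  (∃ i, Module.finrank k (M.V i) ≠ 0) ∧
    ¬ ∃ U W : ∀ i, Submodule k (M.V i), M.IsSubrep U ∧ M.IsSubrep W ∧
        U ≠ (fun _ => ⊥) ∧ W ≠ (fun _ => ⊥) ∧ ∀ i, IsCompl (U i) (W i)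

/-- `d` is a Schur root: a general representation of dimension vector `d` is indecomposable,
i.e. all representations outside the vanishing locus of some nonzero polynomial on the
representation space are indecomposable. -/
def IsSchurRoot (k : Type) [Field k] (d : Q0 → ℕ) : Prop :=
  ∃ p : MvPolynomial (RepCoords s t d) k, p ≠ 0 ∧
    ∀ m : ∀ a : Q1, Matrix (Fin (d (t a))) (Fin (d (s a))) k,
      MvPolynomial.eval (fun x => m x.1 x.2.1 x.2.2) p ≠ 0 →
        Indecomposable s t k (matToRep s t k d m)

end Schur

/-!
Fix `e`. The points of `Rep(Q, d)` whose representation has a subrepresentation of dimension vector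
`e` form a Zariski closed set. This is the valuative criterion for the Grassmannian: if a point `x₀`
lies in the closure, an ultrafilter converging to `x₀` gives a subrepresentation over an ultrapower
`K` of `k`; a valuation ring of `K` centred at `x₀` and a chart of the Grassmannian in which all
coordinates are integral move it to the residue field, and the Nullstellensatz then moves it to `k`.

Consequently the `θ`-semistable points form a Zariski open set. If `d` is not a Schur root, the
decomposable representations are dense, and since `Rep(Q, d)` is irreducible, the ones with a
direct summand of some fixed proper dimension vector `e` are already dense. For `θ ∈ Cone(d)` one of
them is `θ`-semistable, and `θ` vanishes on both of its summands, so `θ ∈ W_e`.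
-/

section Minors

variable {n r : Type*} [Fintype r] [DecidableEq r]

lemma exists_isUnit_det_submatrix {K : Type*} [Field K] {u : Matrix n r K}
    (hu : LinearIndependent K u.col) : ∃ f : r → n, IsUnit (u.submatrix f id).det := by
  obtain ⟨κ, a, -, hspan, hli⟩ := exists_linearIndependent' K u.row
  have hrows : Submodule.span K (Set.range u.row) = ⊤ :=
    span_flip_eq_top_iff_linearIndependent.mpr hu
  let b := Module.Basis.mk hli (hspan.trans hrows).ge
  let σ := b.indexEquiv (Pi.basisFun K r)
  refine ⟨a ∘ σ.symm, (Matrix.isUnit_iff_isUnit_det _).mp ?_⟩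
  exact Matrix.linearIndependent_rows_iff_isUnit.mp (hli.comp σ.symm σ.symm.injective)

lemma det_submatrix_update_of_submatrix_eq_one {R : Type*} [CommRing R] {w : Matrix n r R}
    {f : r → n} (hw : w.submatrix f id = 1) (i : n) (j : r) :
    (w.submatrix (Function.update f j i) id).det = w i j := by
  have hrow : w.submatrix (Function.update f j i) id = (1 : Matrix r r R).updateRow j (w i) := by
    rw [← hw]
    ext a b
    by_cases hab : a = j
    · subst hab; simp
    · simp [hab]
  rw [hrow, ← Matrix.cramer_transpose_apply, Matrix.transpose_one, Matrix.cramer_one,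
    Module.End.one_apply]

/-- The Grassmannian is proper. -/
lemma exists_integral_mul_inv_submatrix {K : Type*} [Field K] [Finite n] (V : ValuationSubring K)
    {u : Matrix n r K} {f₀ : r → n} (hf₀ : IsUnit (u.submatrix f₀ id).det) :
    ∃ f : r → n, IsUnit (u.submatrix f id).det ∧
      ∀ i j, (u * (u.submatrix f id)⁻¹) i j ∈ V := by
  have : Nonempty (r → n) := ⟨f₀⟩
  obtain ⟨f, hmax⟩ :=
    Finite.exists_max fun f : r → n => V.valuation (u.submatrix f id).det
  have hpos : 0 < V.valuation (u.submatrix f id).det :=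
    (zero_lt_iff.mpr (V.valuation.ne_zero_iff.mpr hf₀.ne_zero)).trans_le (hmax f₀)
  have hf : IsUnit (u.submatrix f id).det :=
    isUnit_iff_ne_zero.mpr (V.valuation.ne_zero_iff.mp hpos.ne')
  refine ⟨f, hf, fun i j => (V.valuation_le_one_iff _).mp ?_⟩
  set w := u * (u.submatrix f id)⁻¹ with hw
  have hnorm : w.submatrix f id = 1 := Matrix.mul_nonsing_inv _ hf
  have hu : u = w * u.submatrix f id := by
    rw [hw, Matrix.mul_assoc, Matrix.nonsing_inv_mul _ hf, Matrix.mul_one]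
  have hminor : (u.submatrix (Function.update f j i) id).det =
      w i j * (u.submatrix f id).det := by
    rw [← det_submatrix_update_of_submatrix_eq_one hnorm, ← Matrix.det_mul]
    exact congrArg (fun z : Matrix n r K => (z.submatrix (Function.update f j i) id).det) hu
  have hle := hmax (Function.update f j i)
  rw [hminor, map_mul] at hle
  exact (mul_le_iff_le_one_left hpos).mp hle

end Minors

section Places

lemma nonempty_algHom_of_finiteType (k S : Type*) [Field k] [IsAlgClosed k] [CommRing S]
    [Nontrivial S] [Algebra k S] [Algebra.FiniteType k S] : Nonempty (S →ₐ[k] k) := by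
  obtain ⟨I, hI⟩ := Ideal.exists_maximal S
  let _ : Field (S ⧸ I) := Ideal.Quotient.field I
  have : Module.Finite k (S ⧸ I) := finite_of_finite_type_of_isJacobsonRing k (S ⧸ I)
  let ev : k ≃ₐ[k] S ⧸ I := AlgEquiv.ofBijective (Algebra.ofId k (S ⧸ I))
    IsAlgClosed.algebraMap_bijective_of_isIntegral
  exact ⟨(ev.symm : (S ⧸ I) →ₐ[k] k).comp (Ideal.Quotient.mkₐ k I)⟩

lemma exists_valuationSubring_of_ker_le {A K L : Type*} [CommRing A] [Field K] [Semiring L]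
    [Nontrivial L] (φ : A →+* K) (ψ : A →+* L) (h : RingHom.ker φ ≤ RingHom.ker ψ) :
    ∃ V : ValuationSubring K, (∀ a, φ a ∈ V) ∧ ∀ a, ψ a = 0 → φ a ∈ V.nonunits := by
  have hproper : (RingHom.ker ψ).map φ.rangeRestrict ≠ ⊤ := by
    rw [Ne, Ideal.eq_top_iff_one, Ideal.mem_map_iff_of_surjective _ φ.rangeRestrict_surjective]
    rintro ⟨a, ha, ha1⟩
    have hφ : φ (1 - a) = 0 := by
      rw [map_sub, map_one, sub_eq_zero]
      exact (congrArg Subtype.val ha1).symm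
    have h1 : (1 : A) ∈ RingHom.ker ψ := (Submodule.sub_mem_iff_left _ ha).mp (h hφ)
    exact one_ne_zero ((map_one ψ).symm.trans h1)
  obtain ⟨V, hV, hnonunits⟩ := Ideal.image_subset_nonunits_valuationSubring _ hproper
  exact ⟨V, fun a => hV ⟨a, rfl⟩,
    fun a ha => hnonunits ⟨φ.rangeRestrict a, Ideal.mem_map_of_mem _ ha, rfl⟩⟩

end Places

section ZariskiDensity

variable {k σ : Type*} [Field k]

lemma exists_ultrafilter_of_mem_zeroLocus_vanishingIdeal {S : Set (σ → k)} {x₀ : σ → k}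
    (h : x₀ ∈ MvPolynomial.zeroLocus k (MvPolynomial.vanishingIdeal k S)) :
    ∃ F : Ultrafilter (σ → k), (∀ᶠ x in F, x ∈ S) ∧ ∀ p : MvPolynomial σ k,
      (∀ᶠ x in F, MvPolynomial.eval x p = 0) → MvPolynomial.eval x₀ p = 0 := by
  let D : {p : MvPolynomial σ k // MvPolynomial.eval x₀ p ≠ 0} → Set (σ → k) :=
    fun p => {x | x ∈ S ∧ MvPolynomial.eval x p.1 ≠ 0}
  have hdir : Directed (· ≥ ·) fun p => Filter.principal (D p) := fun p q =>
    ⟨⟨p.1 * q.1, by rw [map_mul]; exact mul_ne_zero p.2 q.2⟩,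
      Filter.principal_mono.mpr fun x hx =>
        ⟨hx.1, left_ne_zero_of_mul (by rw [← map_mul]; exact hx.2)⟩,
      Filter.principal_mono.mpr fun x hx =>
        ⟨hx.1, right_ne_zero_of_mul (by rw [← map_mul]; exact hx.2)⟩⟩
  have hne : ∀ p, (Filter.principal (D p)).NeBot := fun p => by
    rw [Filter.principal_neBot_iff, Set.nonempty_iff_ne_empty]
    refine fun hD => p.2 (h p.1 fun x hx => ?_)
    by_contra hpx
    exact Set.eq_empty_iff_forall_notMem.mp hD x ⟨hx, hpx⟩
  have : (⨅ p, Filter.principal (D p)).NeBot := Filter.iInf_neBot_of_directed hdir hne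
  let F := Ultrafilter.of (⨅ p, Filter.principal (D p))
  have hF : ∀ p, D p ∈ F := fun p =>
    Ultrafilter.of_le _ (Filter.mem_iInf_of_mem p (Filter.mem_principal_self _))
  refine ⟨F, Filter.mem_of_superset (hF ⟨1, by simp⟩) fun x hx => hx.1, fun p hp => ?_⟩
  by_contra hp0
  obtain ⟨x, hx, hx0⟩ := (hp.and (hF ⟨p, hp0⟩)).exists
  exact hx0.2 hx

/-- Affine space is irreducible because its coordinate ring is a domain. -/
lemma exists_vanishingIdeal_eq_bot_of_biUnion {ι : Type*} {I : Set ι} (hI : I.Finite)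
    {S : ι → Set (σ → k)} (h : MvPolynomial.vanishingIdeal k (⋃ i ∈ I, S i) = ⊥) :
    ∃ i ∈ I, MvPolynomial.vanishingIdeal k (S i) = ⊥ := by
  have hinf : hI.toFinset.inf (fun i => MvPolynomial.vanishingIdeal k (S i)) ≤ ⊥ := by
    rw [← h]
    intro p hp x hx
    obtain ⟨i, hi, hxi⟩ := Set.mem_iUnion₂.mp hx
    have hle : hI.toFinset.inf (fun i => MvPolynomial.vanishingIdeal k (S i)) ≤
        MvPolynomial.vanishingIdeal k (S i) := Finset.inf_le (hI.mem_toFinset.mpr hi)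
    exact hle hp x hxi
  obtain ⟨i, hi, hle⟩ := Ideal.isPrime_bot.inf_le'.mp hinf
  exact ⟨i, hI.mem_toFinset.mp hi, le_bot_iff.mp hle⟩

end ZariskiDensity

lemma map_coeRingHom_eq_of_eventually {X R m n : Type*} [Semiring R] {l : Filter X}
    {A B : Matrix m n (X → R)}
    (h : ∀ᶠ x in l, A.map (Pi.evalRingHom _ x) = B.map (Pi.evalRingHom _ x)) :
    A.map (Filter.Germ.coeRingHom l) = B.map (Filter.Germ.coeRingHom l) := by
  ext i j
  exact Filter.Germ.coe_eq.mpr (h.mono fun x hx => congrFun (congrFun hx i) j)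

section Frames

variable {Q0 Q1 : Type*} {s t : Q1 → Q0} {d e : Q0 → ℕ}

/-- A subrepresentation of dimension vector `e` of the representation with matrices `m`, in
coordinates on the Grassmannians: at each vertex `i` the columns of `u i` span the subspace, and
`f i` is an affine chart containing it, the one where the minor on the rows `f i` is invertible;
`u i` is normalized by making that minor the identity. Unlike a family of subspaces, this can
be moved along ring homomorphisms. -/
structure IsSubrepFrame {R : Type*} [CommRing R]
    (m : ∀ a : Q1, Matrix (Fin (d (t a))) (Fin (d (s a))) R)
    (f : ∀ i, Fin (e i) → Fin (d i)) (u : ∀ i, Matrix (Fin (d i)) (Fin (e i)) R) : Prop where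
  submatrix_eq_one : ∀ i, (u i).submatrix (f i) id = 1
  mul_eq : ∀ a, m a * u (s a) = u (t a) * (m a * u (s a)).submatrix (f (t a)) id

lemma isSubrepFrame_mul_inv {R : Type*} [CommRing R]
    {m : ∀ a : Q1, Matrix (Fin (d (t a))) (Fin (d (s a))) R}
    {f : ∀ i, Fin (e i) → Fin (d i)} {u : ∀ i, Matrix (Fin (d i)) (Fin (e i)) R}
    (hdet : ∀ i, IsUnit ((u i).submatrix (f i) id).det)
    (hinv : ∀ a, ∃ c : Matrix (Fin (e (t a))) (Fin (e (s a))) R, m a * u (s a) = u (t a) * c) :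
    IsSubrepFrame m f fun i => u i * ((u i).submatrix (f i) id)⁻¹ where
  submatrix_eq_one i := Matrix.mul_nonsing_inv _ (hdet i)
  mul_eq a := by
    obtain ⟨c, hc⟩ := hinv a
    set g : ∀ i, Matrix (Fin (e i)) (Fin (e i)) R := fun i => ((u i).submatrix (f i) id)⁻¹
    have hg : g (t a) * (u (t a)).submatrix (f (t a)) id = 1 := Matrix.nonsing_inv_mul _ (hdet _)
    calc m a * (u (s a) * g (s a))
        = u (t a) * (c * g (s a)) := by rw [← Matrix.mul_assoc, hc, Matrix.mul_assoc]
      _ = u (t a) * g (t a) * ((u (t a)).submatrix (f (t a)) id * (c * g (s a))) := by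
          rw [Matrix.mul_assoc, ← Matrix.mul_assoc (g (t a)), hg, Matrix.one_mul]
      _ = u (t a) * g (t a) * (u (t a) * (c * g (s a))).submatrix (f (t a)) id := rfl
      _ = u (t a) * g (t a) * (m a * (u (s a) * g (s a))).submatrix (f (t a)) id := by
          rw [← Matrix.mul_assoc (m a), hc, Matrix.mul_assoc (u (t a)) c]

namespace IsSubrepFrame

variable {R S : Type*} [CommRing R] [CommRing S]
  {m : ∀ a : Q1, Matrix (Fin (d (t a))) (Fin (d (s a))) R}
  {f : ∀ i, Fin (e i) → Fin (d i)} {u : ∀ i, Matrix (Fin (d i)) (Fin (e i)) R}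

lemma map (h : IsSubrepFrame m f u) (φ : R →+* S) :
    IsSubrepFrame (fun a => (m a).map φ) f fun i => (u i).map φ where
  submatrix_eq_one i := by
    rw [Matrix.submatrix_map, h.submatrix_eq_one, Matrix.map_one _ φ.map_zero φ.map_one]
  mul_eq a := by
    rw [← Matrix.map_mul, Matrix.submatrix_map, ← Matrix.map_mul, ← h.mul_eq]

lemma of_map {φ : R →+* S} (hφ : Function.Injective φ)
    (h : IsSubrepFrame (fun a => (m a).map φ) f fun i => (u i).map φ) :
    IsSubrepFrame m f u where
  submatrix_eq_one i := Matrix.map_injective hφ <| by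
    beta_reduce
    rw [← Matrix.submatrix_map, h.submatrix_eq_one, Matrix.map_one _ φ.map_zero φ.map_one]
  mul_eq a := Matrix.map_injective hφ <| by
    beta_reduce
    rw [Matrix.map_mul, Matrix.map_mul, ← Matrix.submatrix_map, Matrix.map_mul]
    exact h.mul_eq a

lemma germ {X : Type*} {l : Filter X} {m : ∀ a : Q1, Matrix (Fin (d (t a))) (Fin (d (s a))) (X → R)}
    {u : X → ∀ i, Matrix (Fin (d i)) (Fin (e i)) R}
    (h : ∀ᶠ x in l, IsSubrepFrame (fun a => (m a).map (Pi.evalRingHom _ x)) f (u x)) :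
    IsSubrepFrame (fun a => (m a).map (Filter.Germ.coeRingHom l)) f
      fun i => (Matrix.of fun y z x => u x i y z).map (Filter.Germ.coeRingHom l) where
  submatrix_eq_one i := by
    rw [Matrix.submatrix_map, ← Matrix.map_one (Filter.Germ.coeRingHom l) (map_zero _) (map_one _)]
    refine map_coeRingHom_eq_of_eventually (h.mono fun x hx => ?_)
    rw [Matrix.map_one _ (map_zero _) (map_one _)]
    exact hx.submatrix_eq_one i
  mul_eq a := by
    rw [← Matrix.map_mul, Matrix.submatrix_map, ← Matrix.map_mul]
    refine map_coeRingHom_eq_of_eventually (h.mono fun x hx => ?_)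
    rw [Matrix.map_mul, Matrix.map_mul, ← Matrix.submatrix_map, Matrix.map_mul]
    exact hx.mul_eq a

lemma exists_integral {K : Type*} [Field K] (V : ValuationSubring K)
    {m : ∀ a : Q1, Matrix (Fin (d (t a))) (Fin (d (s a))) K}
    {u : ∀ i, Matrix (Fin (d i)) (Fin (e i)) K} (h : IsSubrepFrame m f u) :
    ∃ f' u', IsSubrepFrame m f' u' ∧ ∀ i (y : Fin (d i)) (z : Fin (e i)), u' i y z ∈ V := by
  have hdet : ∀ i, IsUnit ((u i).submatrix (f i) id).det := fun i => by
    rw [h.submatrix_eq_one, Matrix.det_one]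
    exact isUnit_one
  choose f' hf' hV using fun i => exists_integral_mul_inv_submatrix V (hdet i)
  exact ⟨f', _, isSubrepFrame_mul_inv hf' fun a => ⟨_, h.mul_eq a⟩, hV⟩

lemma descend {k L : Type*} [Field k] [IsAlgClosed k] [CommRing L] [Nontrivial L] [Algebra k L]
    [Finite Q0]
    {m : ∀ a : Q1, Matrix (Fin (d (t a))) (Fin (d (s a))) k}
    {u : ∀ i, Matrix (Fin (d i)) (Fin (e i)) L}
    (h : IsSubrepFrame (fun a => (m a).map (algebraMap k L)) f u) :
    ∃ u', IsSubrepFrame m f u' := by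
  let T : Set L := Set.range fun x : Σ i, Fin (d i) × Fin (e i) => u x.1 x.2.1 x.2.2
  have : Algebra.FiniteType k (Algebra.adjoin k T) := .adjoin_of_finite (Set.finite_range _)
  obtain ⟨π⟩ := nonempty_algHom_of_finiteType k (Algebra.adjoin k T)
  let uT : ∀ i, Matrix (Fin (d i)) (Fin (e i)) (Algebra.adjoin k T) := fun i =>
    Matrix.of fun y z => ⟨u i y z, Algebra.subset_adjoin ⟨⟨i, y, z⟩, rfl⟩⟩
  have hT : IsSubrepFrame (fun a => (m a).map (algebraMap k (Algebra.adjoin k T))) f uT :=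
    of_map (φ := (Algebra.adjoin k T).val.toRingHom) Subtype.val_injective h
  have hm : (fun a => ((m a).map (algebraMap k (Algebra.adjoin k T))).map π.toRingHom) = m := by
    ext a y z
    exact π.commutes _
  exact ⟨_, hm ▸ hT.map π.toRingHom⟩

/-- The valuative criterion: `φ` is a point with values in `K`, and `ψ` a point in its closure. -/
lemma specialize {A K k : Type*} [CommRing A] [Field K] [Field k] [IsAlgClosed k] [Finite Q0]
    [Algebra k A] {φ : A →+* K} {ψ : A →ₐ[k] k} (hker : RingHom.ker φ ≤ RingHom.ker ψ)
    {m : ∀ a : Q1, Matrix (Fin (d (t a))) (Fin (d (s a))) A}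
    {u : ∀ i, Matrix (Fin (d i)) (Fin (e i)) K}
    (h : IsSubrepFrame (fun a => (m a).map φ) f u) :
    ∃ f' u', IsSubrepFrame (e := e) (fun a => (m a).map ψ) f' u' := by
  obtain ⟨V, hφV, hnonunits⟩ := exists_valuationSubring_of_ker_le φ (ψ : A →+* k) hker
  obtain ⟨f', u', h', hu'⟩ := h.exists_integral V
  let φV : A →+* V := φ.codRestrict V.toSubring hφV
  let uV : ∀ i, Matrix (Fin (d i)) (Fin (e i)) V := fun i => Matrix.of fun y z => ⟨_, hu' i y z⟩
  have hV : IsSubrepFrame (fun a => (m a).map φV) f' uV :=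
    of_map (φ := V.subtype) Subtype.val_injective h'
  let res := IsLocalRing.residue V
  algebraize [(res.comp φV).comp (algebraMap k A)]
  have hres : ∀ a, res (φV a) = algebraMap k (IsLocalRing.ResidueField V) (ψ a) := fun a => by
    have ha : φ (a - algebraMap k A (ψ a)) ∈ V.nonunits := hnonunits _ (by simp)
    rw [← SetLike.mem_coe, ← V.image_maximalIdeal] at ha
    obtain ⟨z, hz, hza⟩ := ha
    have hz' : φV (a - algebraMap k A (ψ a)) = z := Subtype.ext hza.symm
    change res (φV a) = res (φV (algebraMap k A (ψ a)))
    rw [← sub_eq_zero, ← map_sub, ← map_sub, hz', IsLocalRing.residue_eq_zero_iff]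
    exact hz
  have hm : (fun a => ((m a).map φV).map res) =
      fun a => ((m a).map ψ).map (algebraMap k (IsLocalRing.ResidueField V)) := by
    ext a y z
    exact hres _
  exact ⟨f', (hm ▸ hV.map res).descend⟩

end IsSubrepFrame

end Frames

namespace QRep

variable {k : Type} [Field k] {Q0 Q1 : Type} {s t : Q1 → Q0} {M N : QRep k s t}

lemma subDim_le_dimVec (U : ∀ i, Submodule k (M.V i)) : M.subDim U ≤ M.dimVec :=
  fun i => (U i).finrank_le

lemma subDim_eq_zero_iff {U : ∀ i, Submodule k (M.V i)} :
    M.subDim U = 0 ↔ U = fun _ => ⊥ := by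
  simp only [funext_iff, subDim, Pi.zero_apply, Submodule.finrank_eq_zero]

lemma subDim_add_subDim_of_isCompl {U W : ∀ i, Submodule k (M.V i)}
    (h : ∀ i, IsCompl (U i) (W i)) : M.subDim U + M.subDim W = M.dimVec :=
  funext fun i => Submodule.finrank_add_eq_of_isCompl (h i)

variable [Fintype Q0] {θ : Q0 → ℝ}

lemma pair_add (d e : Q0 → ℕ) : pair θ (d + e) = pair θ d + pair θ e := by
  simp only [pair, Pi.add_apply, Nat.cast_add, mul_add, Finset.sum_add_distrib]

lemma Semistable.pair_subDim_eq_zero (h : Semistable θ M) {U W : ∀ i, Submodule k (M.V i)}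
    (hU : M.IsSubrep U) (hW : M.IsSubrep W) (hUW : ∀ i, IsCompl (U i) (W i)) :
    pair θ (M.subDim U) = 0 := by
  have hsum : pair θ (M.subDim U) + pair θ (M.subDim W) = 0 := by
    rw [← pair_add, subDim_add_subDim_of_isCompl hUW, h.1]
  linarith [h.2 U hU, h.2 W hW]

lemma Semistable.of_linearEquiv (h : Semistable θ M) (E : ∀ i, N.V i ≃ₗ[k] M.V i)
    (hE : ∀ a x, E (t a) (N.hom a x) = M.hom a (E (s a) x)) : Semistable θ N := by
  constructor
  · have hdim : N.dimVec = M.dimVec := funext fun i => (E i).finrank_eq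
    rw [hdim, h.1]
  · intro U hU
    have hEU : M.IsSubrep fun i => (U i).map (E i).toLinearMap := by
      rintro a _ ⟨x, hx, rfl⟩
      exact ⟨N.hom a x, hU a x hx, hE a x⟩
    have hdim : N.subDim U = M.subDim fun i => (U i).map (E i).toLinearMap :=
      funext fun i => ((E i).finrank_map_eq (U i)).symm
    exact hdim ▸ h.2 _ hEU

end QRep

section RepresentationSpace

variable {k : Type} [Field k] {Q0 Q1 : Type} {s t : Q1 → Q0} {d e : Q0 → ℕ}

/-- The matrices with entries the coordinates of a point `x` of the representation space; taking for
`x` the variables of the polynomial ring gives the generic matrices. -/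
def coordMatrix {R : Type*} (x : RepCoords s t d → R) (a : Q1) :
    Matrix (Fin (d (t a))) (Fin (d (s a))) R :=
  Matrix.of fun i j => x ⟨a, i, j⟩

/-- The representation at a point of the representation space, presented by its coordinates so that
polynomials on the representation space can be evaluated at it. -/
def repOfPoint (x : RepCoords s t d → k) : QRep k s t := matToRep s t k d (coordMatrix x)

lemma dimVec_repOfPoint (x : RepCoords s t d → k) : (repOfPoint x).dimVec = d :=
  funext fun _ => Module.finrank_fin_fun k

variable (k s t d e) in
/-- The points of the representation space whose representation has a subrepresentation of dimension
vector `e`. -/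
def subrepLocus : Set (RepCoords s t d → k) :=
  {x | ∃ U, (repOfPoint x).IsSubrep U ∧ (repOfPoint x).subDim U = e}

variable (k s t d e) in
/-- The points of the representation space whose representation has a direct summand of dimension
vector `e`. -/
def summandLocus : Set (RepCoords s t d → k) :=
  {x | ∃ U W, (repOfPoint x).IsSubrep U ∧ (repOfPoint x).IsSubrep W ∧
    (∀ i, IsCompl (U i) (W i)) ∧ (repOfPoint x).subDim U = e}

lemma exists_isSubrepFrame_of_mem_subrepLocus {x : RepCoords s t d → k}
    (hx : x ∈ subrepLocus k s t d e) : ∃ f u, IsSubrepFrame (e := e) (coordMatrix x) f u := by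
  obtain ⟨U, hU, hdim⟩ := hx
  change ∀ i, Submodule k (Fin (d i) → k) at U
  let b : ∀ i, Module.Basis (Fin (e i)) k (U i) := fun i =>
    Module.finBasisOfFinrankEq k (U i) (congrFun hdim i)
  let u : ∀ i, Matrix (Fin (d i)) (Fin (e i)) k := fun i => Matrix.of fun y z => (b i z).1 y
  have hcol : ∀ i, LinearIndependent k (u i).col := fun i =>
    (b i).linearIndependent.map' (U i).subtype (U i).ker_subtype
  choose f hf using fun i => exists_isUnit_det_submatrix (hcol i)
  refine ⟨f, _, isSubrepFrame_mul_inv hf fun a => ?_⟩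
  let c : Fin (e (s a)) → U (t a) := fun z => ⟨_, hU a (b (s a) z).1 (b (s a) z).2⟩
  refine ⟨Matrix.of fun y z => (b (t a)).repr (c z) y, ?_⟩
  ext y z
  have hc : ∑ j, (b (t a)).repr (c z) j • (b (t a) j).1 = (c z).1 := by
    simpa only [Submodule.coe_sum, Submodule.coe_smul] using
      congrArg Subtype.val ((b (t a)).sum_repr (c z))
  calc (coordMatrix x a * u (s a)) y z = (c z).1 y := rfl
    _ = ∑ j, u (t a) y j * (b (t a)).repr (c z) j := by
      simp only [← hc, Finset.sum_apply, Pi.smul_apply, smul_eq_mul, mul_comm, u, Matrix.of_apply]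

lemma mem_subrepLocus_of_isSubrepFrame {x : RepCoords s t d → k} {f : ∀ i, Fin (e i) → Fin (d i)}
    {u : ∀ i, Matrix (Fin (d i)) (Fin (e i)) k} (h : IsSubrepFrame (coordMatrix x) f u) :
    x ∈ subrepLocus k s t d e := by
  refine ⟨fun i => LinearMap.range (u i).mulVecLin, ?_, funext fun i => ?_⟩
  · rintro a _ ⟨w, rfl⟩
    refine ⟨((coordMatrix x a * u (s a)).submatrix (f (t a)) id).mulVec w, ?_⟩
    change (u (t a)).mulVec _ = (coordMatrix x a).mulVec ((u (s a)).mulVec w)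
    rw [Matrix.mulVec_mulVec, Matrix.mulVec_mulVec, ← h.mul_eq]
  · have hleft : Function.LeftInverse (fun z => z ∘ f i) (u i).mulVec := fun w => by
      change ((u i).submatrix (f i) id).mulVec w = w
      rw [h.submatrix_eq_one, Matrix.one_mulVec]
    exact (LinearMap.finrank_range_of_inj hleft.injective).trans (Module.finrank_fin_fun k)

theorem zeroLocus_vanishingIdeal_subrepLocus [IsAlgClosed k] [Finite Q0] :
    MvPolynomial.zeroLocus k (MvPolynomial.vanishingIdeal k (subrepLocus k s t d e)) =
      subrepLocus k s t d e := by
  refine Set.Subset.antisymm (fun x₀ hx₀ => ?_) (MvPolynomial.zeroLocus_vanishingIdeal_le _)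
  obtain ⟨F, hFS, hF⟩ := exists_ultrafilter_of_mem_zeroLocus_vanishingIdeal hx₀
  obtain ⟨f, hf⟩ := Ultrafilter.eventually_exists_iff.mp <|
    hFS.mono fun x hx => exists_isSubrepFrame_of_mem_subrepLocus hx
  obtain ⟨u, hu⟩ := hf.choice
  let ev : MvPolynomial (RepCoords s t d) k →+* ((RepCoords s t d → k) → k) :=
    RingHom.pi MvPolynomial.eval
  let φ := (Filter.Germ.coeRingHom (F : Filter (RepCoords s t d → k))).comp ev
  have hker : RingHom.ker φ ≤ RingHom.ker (MvPolynomial.aeval (R := k) x₀) := fun p hp =>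
    hF p (Filter.Germ.coe_eq.mp hp)
  have hgeneric (x : RepCoords s t d → k) : (fun a => ((coordMatrix MvPolynomial.X a).map ev).map
      (Pi.evalRingHom _ x)) = coordMatrix x := by
    ext a i j
    exact MvPolynomial.eval_X _
  have hframe : IsSubrepFrame (fun a => (coordMatrix MvPolynomial.X a).map φ) f _ :=
    IsSubrepFrame.germ (hu.mono fun x hx => (hgeneric x).symm ▸ hx)
  obtain ⟨f₀, u₀, h₀⟩ := hframe.specialize hker
  have hspecial : (fun a => (coordMatrix MvPolynomial.X a).map (MvPolynomial.aeval (R := k) x₀)) =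
      coordMatrix x₀ := by
    ext a i j
    exact MvPolynomial.aeval_X _ _
  exact mem_subrepLocus_of_isSubrepFrame (hspecial ▸ h₀)

lemma exists_mem_summandLocus_of_not_indecomposable (hd0 : d ≠ 0) {x : RepCoords s t d → k}
    (h : ¬ Indecomposable s t k (repOfPoint x)) :
    ∃ e, (e ≤ d ∧ e ≠ 0 ∧ e ≠ d) ∧ x ∈ summandLocus k s t d e := by
  obtain ⟨i, hi⟩ := Function.ne_iff.mp hd0
  have hne : ∃ i, Module.finrank k ((repOfPoint x).V i) ≠ 0 :=
    ⟨i, fun h0 => hi ((congrFun (dimVec_repOfPoint x) i).symm.trans h0)⟩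
  obtain ⟨U, W, hU, hW, hU0, hW0, hUW⟩ := of_not_not fun hsum => h ⟨hne, hsum⟩
  have hadd := (QRep.subDim_add_subDim_of_isCompl hUW).trans (dimVec_repOfPoint x)
  refine ⟨(repOfPoint x).subDim U, ⟨?_, ?_, ?_⟩, U, W, hU, hW, hUW, rfl⟩
  · exact (QRep.subDim_le_dimVec U).trans_eq (dimVec_repOfPoint x)
  · exact fun h0 => hU0 (QRep.subDim_eq_zero_iff.mp h0)
  · exact fun hUd => hW0 (QRep.subDim_eq_zero_iff.mp (left_eq_add.mp (hUd.trans hadd.symm)))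

lemma vanishingIdeal_iUnion_summandLocus_eq_bot (hd0 : d ≠ 0) (hd : ¬ IsSchurRoot s t k d) :
    MvPolynomial.vanishingIdeal k
      (⋃ e ∈ {e | e ≤ d ∧ e ≠ 0 ∧ e ≠ d}, summandLocus k s t d e) = ⊥ := by
  refine (Submodule.eq_bot_iff _).mpr fun p hp => ?_
  by_contra hp0
  refine hd ⟨p, hp0, fun m hm => ?_⟩
  by_contra hdec
  let x : RepCoords s t d → k := fun z => m z.1 z.2.1 z.2.2
  obtain ⟨e, he, hxe⟩ := exists_mem_summandLocus_of_not_indecomposable (x := x) hd0 hdec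
  exact hm (hp x (Set.mem_biUnion he hxe))

lemma exists_vanishingIdeal_summandLocus_eq_bot [Finite Q0] (hd0 : d ≠ 0)
    (hd : ¬ IsSchurRoot s t k d) : ∃ e, (e ≤ d ∧ e ≠ 0 ∧ e ≠ d) ∧
      MvPolynomial.vanishingIdeal k (summandLocus k s t d e) = ⊥ := by
  classical
  have := Fintype.ofFinite Q0
  exact exists_vanishingIdeal_eq_bot_of_biUnion ((Set.finite_Iic d).subset fun e he => he.1)
    (vanishingIdeal_iUnion_summandLocus_eq_bot hd0 hd)

variable [Fintype Q0] {θ : Q0 → ℝ}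

lemma exists_semistable_repOfPoint {M : QRep k s t} (hM : M.dimVec = d)
    (h : QRep.Semistable θ M) :
    ∃ x : RepCoords s t d → k, QRep.Semistable θ (repOfPoint x) := by
  let b : ∀ i, Module.Basis (Fin (d i)) k (M.V i) := fun i =>
    Module.finBasisOfFinrankEq k (M.V i) (congrFun hM i)
  refine ⟨fun z => LinearMap.toMatrix (b (s z.1)) (b (t z.1)) (M.hom z.1) z.2.1 z.2.2,
    h.of_linearEquiv (fun i => (b i).equivFun.symm) fun a x => ?_⟩
  obtain ⟨y, rfl⟩ := (b (s a)).equivFun.surjective x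
  have hy : (b (s a)).equivFun.symm ((b (s a)).equivFun y) = y :=
    (b (s a)).equivFun.symm_apply_apply y
  refine (LinearEquiv.symm_apply_eq _).mpr ?_
  exact (LinearMap.toMatrix_mulVec_repr (b (s a)) (b (t a)) (M.hom a) y).trans <|
    congrArg (fun v => (b (t a)).equivFun (M.hom a v)) hy.symm

lemma exists_mem_subrepLocus_of_not_semistable {x : RepCoords s t d → k}
    (hθ : QRep.pair θ d = 0) (h : ¬ QRep.Semistable θ (repOfPoint x)) :
    ∃ e ≤ d, 0 < QRep.pair θ e ∧ x ∈ subrepLocus k s t d e := by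
  rw [QRep.Semistable, dimVec_repOfPoint] at h
  push Not at h
  obtain ⟨U, hU, hpos⟩ := h hθ
  exact ⟨_, (QRep.subDim_le_dimVec U).trans_eq (dimVec_repOfPoint x), hpos, U, hU, rfl⟩

/-- The semistable locus is Zariski open, so if it is nonempty it meets every dense set. -/
theorem exists_mem_semistable_of_vanishingIdeal_eq_bot [IsAlgClosed k]
    {D : Set (RepCoords s t d → k)} (hD : MvPolynomial.vanishingIdeal k D = ⊥)
    {x₀ : RepCoords s t d → k} (hx₀ : QRep.Semistable θ (repOfPoint x₀)) :
    ∃ x ∈ D, QRep.Semistable θ (repOfPoint x) := by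
  classical
  by_contra! hns
  have hθ : QRep.pair θ d = 0 := dimVec_repOfPoint x₀ ▸ hx₀.1
  have hcover : D ⊆ ⋃ e ∈ {e | e ≤ d ∧ 0 < QRep.pair θ e}, subrepLocus k s t d e := by
    intro x hx
    obtain ⟨e, hed, hpos, hxe⟩ := exists_mem_subrepLocus_of_not_semistable hθ (hns x hx)
    exact Set.mem_biUnion ⟨hed, hpos⟩ hxe
  obtain ⟨e, ⟨-, hpos⟩, he⟩ := exists_vanishingIdeal_eq_bot_of_biUnion
    ((Set.finite_Iic d).subset fun e he => he.1)
    (le_bot_iff.mp ((MvPolynomial.vanishingIdeal_anti_mono hcover).trans hD.le))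
  have hx₀e : x₀ ∈ subrepLocus k s t d e := by
    rw [← zeroLocus_vanishingIdeal_subrepLocus, he, MvPolynomial.zeroLocus_bot]
    trivial
  obtain ⟨U, hU, rfl⟩ := hx₀e
  exact hpos.not_ge (hx₀.2 U hU)

end RepresentationSpace

theorem stmt13_general (k : Type) [Field k] [IsAlgClosed k] {Q0 Q1 : Type} [Fintype Q0]
    (s t : Q1 → Q0) (d : Q0 → ℕ) (hd0 : d ≠ 0) (hd : ¬ IsSchurRoot s t k d) :
    ∃ e : Q0 → ℕ, e ≤ d ∧ e ≠ 0 ∧ e ≠ d ∧ Wall k s t d e = SstCone k s t d := by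
  obtain ⟨e, ⟨hed, he0, hne⟩, hdense⟩ := exists_vanishingIdeal_summandLocus_eq_bot hd0 hd
  refine ⟨e, hed, he0, hne, Set.Subset.antisymm ?_ ?_⟩
  · rintro θ ⟨hθ, -, M, U, hM, -, -, hss⟩
    exact ⟨hθ, M, hM, hss⟩
  · rintro θ ⟨hθ, M, hM, hss⟩
    obtain ⟨x₀, hx₀⟩ := exists_semistable_repOfPoint hM hss
    obtain ⟨x, ⟨U, W, hU, hW, hUW, rfl⟩, hx⟩ :=
      exists_mem_semistable_of_vanishingIdeal_eq_bot hdense hx₀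
    exact ⟨hθ, hx.pair_subDim_eq_zero hU hW hUW, repOfPoint x, U, dimVec_repOfPoint x, hU, rfl, hx⟩

/-- if `d ≠ 0` is not a Schur root, then there is a nonzero proper
subdimension vector `e` of `d` with `W_e = Cone(d)`. -/
theorem stmt13 (k : Type) [Field k] [IsAlgClosed k] [CharZero k]
    {Q0 Q1 : Type} [Fintype Q0] [Fintype Q1] (s t : Q1 → Q0)
    (d : Q0 → ℕ) (hd0 : d ≠ 0) (hd : ¬ IsSchurRoot s t k d) :
    ∃ e : Q0 → ℕ, e ≤ d ∧ e ≠ 0 ∧ e ≠ d ∧ Wall k s t d e = SstCone k s t d :=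
  stmt13_general k s t d hd0 hd
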